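/- arXiv:2210.12286 — 2 statements merged into one kernel-verified Lean document; each statement's English description precedes it below -/
import Mathlib

section
/- Let f : ℝ → ℝ be integrable and let W be a family of open intervals of ℝ. For every ε > 0 there exists a finite subfamily T = {T₁, …, T_N} ⊆ W such that ∫ over (⋃W) \ (T₁ ∪ … ∪ T_N) of |f(t)| dt < ε, every point of ℝ belongs to at most two of the intervals T₁, …, T_N, and each interval Tₖ intersects at most two other intervals of T. -/
open MeasureTheory

/-!
By the Lindelöf property and dominated convergence, finitely many members of `W` already capture
all but `ε` of the integral. Discarding redundant members without changing their union leaves a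
family in which every `I` has a private point `p I`, lying in no other member. If `x ∈ J`, then
`J` contains everything between `x` and `p J`, hence no other private point lies there: so `x` is in
at most one `J` with `p J ≤ x` and at most one with `x ≤ p J`. If `J` meets `I`, then `I ∪ J`
contains everything between `p I` and `p J`, and the same argument applies with `p I` in place
of `x`.
-/

section Irredundant

open Set

variable {α : Type*}

/-- A family of sets is irredundant if each member has a private point, one that belongs to no other
member; equivalently, removing any member makes the union strictly smaller. -/
def IsIrredundant (T : Set (Set α)) : Prop :=
  ∀ I ∈ T, ∃ x ∈ I, ∀ J ∈ T, x ∈ J → J = I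

theorem isIrredundant_of_minimal_sUnion_eq {T : Set (Set α)} {U : Set α}
    (hT : Minimal (fun G : Set (Set α) ↦ ⋃₀ G = U) T) : IsIrredundant T := by
  intro I hI
  by_contra! hcovered
  have hunion : ⋃₀ (T \ {I}) = U := by
    rw [← hT.prop]
    refine (sUnion_subset_sUnion sdiff_subset).antisymm ?_
    rintro x ⟨J, hJ, hxJ⟩
    by_cases hJI : J = I
    · obtain ⟨K, hK, hxK, hKI⟩ := hcovered x (hJI ▸ hxJ)
      exact ⟨K, ⟨hK, hKI⟩, hxK⟩
    · exact ⟨J, ⟨hJ, hJI⟩, hxJ⟩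
  exact (hT.le_of_le hunion sdiff_subset hI).2 rfl

theorem exists_subset_isIrredundant_sUnion_eq {F : Set (Set α)} (hF : F.Finite) :
    ∃ T ⊆ F, IsIrredundant T ∧ ⋃₀ T = ⋃₀ F := by
  have hfinite : {G | G ⊆ F ∧ ⋃₀ G = ⋃₀ F}.Finite := hF.finite_subsets.subset fun _ hG ↦ hG.1
  obtain ⟨T, hT⟩ := hfinite.exists_minimal ⟨F, subset_rfl, rfl⟩
  refine ⟨T, hT.prop.1, isIrredundant_of_minimal_sUnion_eq ⟨hT.prop.2, ?_⟩, hT.prop.2⟩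
  exact fun G hG hGT ↦ hT.le_of_le ⟨hGT.trans hT.prop.1, hG⟩ hGT

variable [LinearOrder α]

theorem encard_le_two_of_mem_uIcc_imp_eq {β : Type*} {S : Set β} {p : β → α} {x : α}
    (h : ∀ b ∈ S, ∀ c ∈ S, p c ∈ uIcc x (p b) → c = b) : S.encard ≤ 2 := by
  have hleft : {b ∈ S | p b ≤ x}.Subsingleton := by
    rintro b ⟨hb, hbx⟩ c ⟨hc, hcx⟩
    rcases le_total (p b) (p c) with hbc | hcb
    · exact (h b hb c hc (mem_uIcc_of_ge hbc hcx)).symm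
    · exact h c hc b hb (mem_uIcc_of_ge hcb hbx)
  have hright : {b ∈ S | x ≤ p b}.Subsingleton := by
    rintro b ⟨hb, hxb⟩ c ⟨hc, hxc⟩
    rcases le_total (p b) (p c) with hbc | hcb
    · exact h c hc b hb (mem_uIcc_of_le hxb hbc)
    · exact (h b hb c hc (mem_uIcc_of_le hxc hcb)).symm
  have hcover : S ⊆ {b ∈ S | p b ≤ x} ∪ {b ∈ S | x ≤ p b} := fun b hb ↦
    (le_total (p b) x).imp (fun hbx ↦ ⟨hb, hbx⟩) (fun hxb ↦ ⟨hb, hxb⟩)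
  calc S.encard
      ≤ {b ∈ S | p b ≤ x}.encard + {b ∈ S | x ≤ p b}.encard :=
        (encard_le_encard hcover).trans (encard_union_le _ _)
    _ ≤ 1 + 1 := add_le_add (encard_le_one_iff_subsingleton.2 hleft)
        (encard_le_one_iff_subsingleton.2 hright)
    _ = 2 := one_add_one_eq_two

namespace IsIrredundant

variable {T : Set (Set α)}

theorem encard_setOf_mem_le_two (hT : IsIrredundant T) (hconn : ∀ I ∈ T, I.OrdConnected) (x : α) :
    {I ∈ T | x ∈ I}.encard ≤ 2 := by
  have : Nonempty α := ⟨x⟩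
  choose! p hp_mem hp_private using hT
  refine encard_le_two_of_mem_uIcc_imp_eq (p := p) (x := x) ?_
  rintro J ⟨hJ, hxJ⟩ K ⟨hK, -⟩ hbetween
  exact (hp_private K hK J hJ ((hconn J hJ).uIcc_subset hxJ (hp_mem J hJ) hbetween)).symm

theorem encard_setOf_inter_nonempty_le_two (hT : IsIrredundant T)
    (hconn : ∀ I ∈ T, I.OrdConnected) {I : Set α} (hI : I ∈ T) :
    {J ∈ T | J ≠ I ∧ (J ∩ I).Nonempty}.encard ≤ 2 := by
  have : Nonempty α := (hT I hI).nonempty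
  choose! p hp_mem hp_private using hT
  refine encard_le_two_of_mem_uIcc_imp_eq (p := p) (x := p I) ?_
  rintro J ⟨hJ, -, y, hyJ, hyI⟩ K ⟨hK, hKI, -⟩ hbetween
  rcases uIcc_subset_uIcc_union_uIcc (b := y) hbetween with hpy | hyp
  · exact absurd (hp_private K hK I hI ((hconn I hI).uIcc_subset (hp_mem I hI) hyI hpy)).symm hKI
  · exact (hp_private K hK J hJ ((hconn J hJ).uIcc_subset hyJ (hp_mem J hJ) hyp)).symm

end IsIrredundant

end Irredundant

section SetIntegral

open Filter Set
open scoped Topology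

variable {α E : Type*} [MeasurableSpace α] {μ : Measure α} [NormedAddCommGroup E]

theorem tendsto_setIntegral_iUnion_diff_biUnion_finset [NormedSpace ℝ E] {ι : Type*} [Countable ι]
    {u : ι → Set α} (hu : ∀ i, MeasurableSet (u i)) {f : α → E}
    (hf : IntegrableOn f (⋃ i, u i) μ) :
    Tendsto (fun F : Finset ι ↦ ∫ x in (⋃ i, u i) \ ⋃ i ∈ F, u i, f x ∂μ) atTop (𝓝 0) := by
  have hmeas (F : Finset ι) : MeasurableSet ((⋃ i, u i) \ ⋃ i ∈ F, u i) :=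
    (MeasurableSet.iUnion hu).diff (F.measurableSet_biUnion fun i _ ↦ hu i)
  have hanti : Antitone fun F : Finset ι ↦ (⋃ i, u i) \ ⋃ i ∈ F, u i := fun F G hFG ↦
    sdiff_subset_sdiff_right (biUnion_subset_biUnion_left hFG)
  have hinter : ⋂ F : Finset ι, ((⋃ i, u i) \ ⋃ i ∈ F, u i) = ∅ := by
    refine eq_empty_of_forall_notMem fun x hx ↦ ?_
    rw [mem_iInter] at hx
    obtain ⟨i, hi⟩ := mem_iUnion.1 (hx ∅).1
    exact (hx {i}).2 (by simpa using hi)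
  simpa [hinter] using
    tendsto_setIntegral_of_antitone hmeas hanti ⟨∅, hf.mono_set sdiff_subset⟩

theorem exists_finite_subset_setIntegral_norm_sUnion_diff_lt [TopologicalSpace α]
    [HereditarilyLindelofSpace α] [OpensMeasurableSpace α] {f : α → E} {W : Set (Set α)}
    (hW : ∀ I ∈ W, IsOpen I) (hf : IntegrableOn f (⋃₀ W) μ) {ε : ℝ} (hε : 0 < ε) :
    ∃ F ⊆ W, F.Finite ∧ ∫ x in ⋃₀ W \ ⋃₀ F, ‖f x‖ ∂μ < ε := by
  obtain ⟨S, hS, hSW⟩ := eq_open_union_countable (fun I : W ↦ (I : Set α)) fun I ↦ hW I I.2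
  rw [biUnion_eq_iUnion, ← sUnion_eq_iUnion] at hSW
  have : Countable S := hS
  have hlim := tendsto_setIntegral_iUnion_diff_biUnion_finset (μ := μ) (f := fun x ↦ ‖f x‖)
    (u := fun I : S ↦ (I : Set α)) (fun I ↦ (hW _ I.1.2).measurableSet) (hSW ▸ hf.norm)
  obtain ⟨F, hF⟩ := (hlim.eventually_lt_const hε).exists
  refine ⟨(fun I : S ↦ (I : Set α)) '' F, ?_, F.finite_toSet.image _, ?_⟩
  · rintro _ ⟨I, -, rfl⟩
    exact I.1.2
  · rwa [sUnion_image, ← hSW]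

end SetIntegral

theorem stmt_15_general {α E : Type*} [LinearOrder α] [TopologicalSpace α]
    [HereditarilyLindelofSpace α] [MeasurableSpace α] [OpensMeasurableSpace α] {μ : Measure α}
    [NormedAddCommGroup E] {f : α → E} {W : Set (Set α)} (hopen : ∀ I ∈ W, IsOpen I)
    (hconn : ∀ I ∈ W, I.OrdConnected) (hf : IntegrableOn f (⋃₀ W) μ) {ε : ℝ} (hε : 0 < ε) :
    ∃ T ⊆ W, T.Finite ∧ ∫ x in ⋃₀ W \ ⋃₀ T, ‖f x‖ ∂μ < ε ∧
      (∀ x, {I ∈ T | x ∈ I}.encard ≤ 2) ∧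
      ∀ I ∈ T, {J ∈ T | J ≠ I ∧ (J ∩ I).Nonempty}.encard ≤ 2 := by
  obtain ⟨F, hFW, hF, hFε⟩ := exists_finite_subset_setIntegral_norm_sUnion_diff_lt hopen hf hε
  obtain ⟨T, hTF, hT, hTU⟩ := exists_subset_isIrredundant_sUnion_eq hF
  have hTconn : ∀ I ∈ T, I.OrdConnected := fun I hI ↦ hconn I (hFW (hTF hI))
  exact ⟨T, hTF.trans hFW, hF.subset hTF, hTU ▸ hFε, hT.encard_setOf_mem_le_two hTconn,
    fun _ hI ↦ hT.encard_setOf_inter_nonempty_le_two hTconn hI⟩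

/-- From any family `W` of open intervals one can select a finite subfamily `T`
capturing all but `ε` of the integral of `|f|` over `⋃W`, such that every point
lies in at most two intervals of `T` and each interval of `T` meets at most two
other intervals of `T`. -/
theorem stmt_15 (f : ℝ → ℝ) (hf : Integrable f)
    (W : Set (Set ℝ)) (hW : ∀ I ∈ W, ∃ a b : ℝ, I = Set.Ioo a b) :
    ∀ ε : ℝ, 0 < ε →
      ∃ T : Set (Set ℝ), T ⊆ W ∧ T.Finite ∧
        (∫ t in (⋃₀ W) \ (⋃₀ T), |f t|) < ε ∧
        (∀ x : ℝ, ({I ∈ T | x ∈ I}).ncard ≤ 2) ∧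
        (∀ I ∈ T, ({J ∈ T | J ≠ I ∧ (J ∩ I).Nonempty}).ncard ≤ 2) := by
  intro ε hε
  have hopen_conn : ∀ I ∈ W, IsOpen I ∧ I.OrdConnected := fun I hI ↦ by
    obtain ⟨a, b, rfl⟩ := hW I hI
    exact ⟨isOpen_Ioo, Set.ordConnected_Ioo⟩
  obtain ⟨T, hTW, hT, hTε, hpoint, hmeet⟩ := stmt_15_general
    (fun I hI ↦ (hopen_conn I hI).1) (fun I hI ↦ (hopen_conn I hI).2) hf.integrableOn hε
  exact ⟨T, hTW, hT, hTε, fun x ↦ (Set.encard_le_coe_iff_finite_ncard_le.1 (hpoint x)).2,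
    fun I hI ↦ (Set.encard_le_coe_iff_finite_ncard_le.1 (hmeet I hI)).2⟩
end

section
/- If f is moreover integrable on (0,∞) (f ∈ L¹), then for every s ∈ ℝ the limit lim_{t→∞} a(t,s) exists in ℂ. -/
open MeasureTheory Complex Filter

open Set Topology

/-!
In the coordinates `x ∓ i y` the free Dirac system is diagonal, with solutions `exp (∓ i z t)`.
Removing these exponentials turns the system into `p' = f exp (2 i z t) q`,
`q' = f exp (-2 i z t) p`, so for real `z` the pair `ψ = (p, q)` satisfies `‖ψ'‖ ≤ |f| ‖ψ‖`.
Once the tail of `∫ |f|` is smaller than one, this inequality bounds `ψ`; then `ψ'` is integrable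
at infinity and `ψ` converges. Finally `a` is a linear combination of the functions `p` belonging to
the two columns of `M`.
-/

section AbsoluteContinuity

variable {E : Type*} [NormedAddCommGroup E] [NormedSpace ℝ E] {a b c : ℝ} {ψ φ : ℝ → E}

lemma absolutelyContinuousOnInterval_of_dist_le {X Y : Type*} [PseudoMetricSpace X]
    [PseudoMetricSpace Y] {F : ℝ → X} {G : ℝ → Y} (hG : AbsolutelyContinuousOnInterval G a b)
    (hFG : ∀ s ∈ uIcc a b, ∀ t ∈ uIcc a b, dist (F s) (F t) ≤ dist (G s) (G t)) :
    AbsolutelyContinuousOnInterval F a b := by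
  rw [absolutelyContinuousOnInterval_iff] at hG ⊢
  intro ε hε
  obtain ⟨δ, hδ, hG⟩ := hG ε hε
  refine ⟨δ, hδ, fun I hI hlen ↦ (Finset.sum_le_sum fun i hi ↦ ?_).trans_lt (hG I hI hlen)⟩
  exact hFG _ (hI.1 i hi).1 _ (hI.1 i hi).2

lemma absolutelyContinuousOnInterval_intervalIntegral (hφ : IntervalIntegrable φ volume a b)
    (hc : c ∈ uIcc a b) : AbsolutelyContinuousOnInterval (fun t ↦ ∫ u in c..t, φ u) a b := by
  refine absolutelyContinuousOnInterval_of_dist_le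
    (hφ.norm.absolutelyContinuousOnInterval_intervalIntegral hc) fun s hs t ht ↦ ?_
  have hint {r : ℝ} (hr : r ∈ uIcc a b) : IntervalIntegrable φ volume c r :=
    hφ.mono_set (uIcc_subset_uIcc hc hr)
  rw [dist_eq_norm, dist_eq_norm, intervalIntegral.integral_interval_sub_left (hint hs) (hint ht),
    intervalIntegral.integral_interval_sub_left (hint hs).norm (hint ht).norm]
  exact intervalIntegral.norm_integral_le_abs_integral_norm

lemma intervalIntegral_eq_sub_of_ae_hasDerivAt [CompleteSpace E]
    (hψ : AbsolutelyContinuousOnInterval ψ a b) (hφ : IntervalIntegrable φ volume a b)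
    (hderiv : ∀ᵐ t, t ∈ uIcc a b → HasDerivAt ψ (φ t) t) : ∫ u in a..b, φ u = ψ b - ψ a := by
  obtain ⟨C, hC⟩ := (hψ.fun_sub (absolutelyContinuousOnInterval_intervalIntegral hφ
      left_mem_uIcc)).const_of_ae_hasDerivAt_zero <| by
    filter_upwards [hderiv, hφ.ae_hasDerivAt_integral] with t hψt hφt ht
    simpa using (hψt ht).fun_sub (hφt ht a left_mem_uIcc)
  have hab := (hC a left_mem_uIcc).trans (hC b right_mem_uIcc).symm
  rw [intervalIntegral.integral_same, sub_zero] at hab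
  rw [hab, sub_sub_cancel]

end AbsoluteContinuity

lemma norm_intervalIntegral_le_integral_Ioi_mul {E F : Type*} [NormedAddCommGroup E]
    [NormedSpace ℝ E] [NormedAddCommGroup F] {a b C : ℝ} {k : ℝ → F} {ψ φ : ℝ → E}
    (hk : IntegrableOn k (Ioi a))
    (hφ : ∀ t, a < t → ‖φ t‖ ≤ ‖k t‖ * ‖ψ t‖) (hab : a ≤ b) (hC : ∀ t ∈ Icc a b, ‖ψ t‖ ≤ C) :
    ‖∫ u in a..b, φ u‖ ≤ (∫ u in Ioi a, ‖k u‖) * C := by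
  have hk_Ioc : IntegrableOn (fun u ↦ ‖k u‖ * C) (Ioc a b) :=
    (hk.mono_set Ioc_subset_Ioi_self).norm.mul_const C
  have hC₀ : 0 ≤ C := (norm_nonneg _).trans (hC a (left_mem_Icc.2 hab))
  calc ‖∫ u in a..b, φ u‖
      ≤ ∫ u in a..b, ‖k u‖ * C := by
        refine intervalIntegral.norm_integral_le_of_norm_le hab (.of_forall fun u hu ↦ ?_)
          ((intervalIntegrable_iff_integrableOn_Ioc_of_le hab).2 hk_Ioc)
        exact (hφ u hu.1).trans (by gcongr; exact hC u (Ioc_subset_Icc_self hu))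
    _ = (∫ u in Ioc a b, ‖k u‖) * C := by
        rw [intervalIntegral.integral_mul_const, intervalIntegral.integral_of_le hab]
    _ ≤ (∫ u in Ioi a, ‖k u‖) * C := by
        refine mul_le_mul_of_nonneg_right (setIntegral_mono_set hk.norm ?_ ?_) hC₀
        · exact .of_forall fun _ ↦ norm_nonneg _
        · exact Ioc_subset_Ioi_self.eventuallyLE

/-- `ψ` is locally absolutely continuous on `[a, ∞)` with almost everywhere derivative `φ`, encoded
by the integral equation `ψ t = ψ a + ∫ u in a..t, φ u`. Local integrability of `φ` is required
because the integral of a non-integrable function is the junk value `0`. -/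
structure IsPrimitiveFrom {E : Type*} [NormedAddCommGroup E] [NormedSpace ℝ E]
    (a : ℝ) (ψ φ : ℝ → E) : Prop where
  intervalIntegrable : ∀ t, a ≤ t → IntervalIntegrable φ volume a t
  eq_add_integral : ∀ t, a ≤ t → ψ t = ψ a + ∫ u in a..t, φ u

namespace IsPrimitiveFrom

variable {E F : Type*} [NormedAddCommGroup E] [NormedSpace ℝ E] [NormedAddCommGroup F]
  [NormedSpace ℝ F] {a b t : ℝ} {ψ φ ψ₁ φ₁ ψ₂ φ₂ : ℝ → E}

lemma congr (h : IsPrimitiveFrom a ψ φ₁) (hφ : ∀ t, a ≤ t → φ₁ t = φ₂ t) :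
    IsPrimitiveFrom a ψ φ₂ where
  intervalIntegrable t ht := (h.intervalIntegrable t ht).congr <| by
    intro u hu
    rw [uIoc_of_le ht] at hu
    exact hφ u hu.1.le
  eq_add_integral t ht := by
    rw [h.eq_add_integral t ht]
    congr 1
    refine intervalIntegral.integral_congr fun u hu ↦ hφ u ?_
    rw [uIcc_of_le ht] at hu
    exact hu.1

lemma of_hasDerivAt [CompleteSpace E] (hψ : ∀ t, HasDerivAt ψ (φ t) t) (hφ : Continuous φ) :
    IsPrimitiveFrom a ψ φ where
  intervalIntegrable _ _ := hφ.intervalIntegrable _ _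
  eq_add_integral t _ := by
    rw [intervalIntegral.integral_eq_sub_of_hasDerivAt (fun u _ ↦ hψ u)
      (hφ.intervalIntegrable _ _), add_sub_cancel]

lemma sub (h₁ : IsPrimitiveFrom a ψ₁ φ₁) (h₂ : IsPrimitiveFrom a ψ₂ φ₂) :
    IsPrimitiveFrom a (fun t ↦ ψ₁ t - ψ₂ t) (fun t ↦ φ₁ t - φ₂ t) where
  intervalIntegrable t ht := (h₁.intervalIntegrable t ht).sub (h₂.intervalIntegrable t ht)
  eq_add_integral t ht := by
    rw [intervalIntegral.integral_sub (h₁.intervalIntegrable t ht) (h₂.intervalIntegrable t ht),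
      h₁.eq_add_integral t ht, h₂.eq_add_integral t ht]
    abel

lemma const_smul {𝕜 : Type*} [NormedField 𝕜] [NormedSpace 𝕜 E] [SMulCommClass ℝ 𝕜 E] (c : 𝕜)
    (h : IsPrimitiveFrom a ψ φ) : IsPrimitiveFrom a (fun t ↦ c • ψ t) (fun t ↦ c • φ t) where
  intervalIntegrable t ht := (h.intervalIntegrable t ht).smul c
  eq_add_integral t ht := by
    rw [intervalIntegral.integral_smul, h.eq_add_integral t ht, smul_add]

lemma prodMk [CompleteSpace E] [CompleteSpace F] {χ η : ℝ → F} (hψ : IsPrimitiveFrom a ψ φ)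
    (hχ : IsPrimitiveFrom a χ η) :
    IsPrimitiveFrom a (fun t ↦ (ψ t, χ t)) (fun t ↦ (φ t, η t)) where
  intervalIntegrable t ht :=
    ⟨(hψ.intervalIntegrable t ht).1.prodMk (hχ.intervalIntegrable t ht).1,
      (hψ.intervalIntegrable t ht).2.prodMk (hχ.intervalIntegrable t ht).2⟩
  eq_add_integral t ht := by
    rw [intervalIntegral.integral_of_le ht, integral_pair (hψ.intervalIntegrable t ht).1
      (hχ.intervalIntegrable t ht).1, hψ.eq_add_integral t ht, hχ.eq_add_integral t ht,
      intervalIntegral.integral_of_le ht, intervalIntegral.integral_of_le ht, Prod.mk_add_mk]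

lemma mono_left (h : IsPrimitiveFrom a ψ φ) (hab : a ≤ b) : IsPrimitiveFrom b ψ φ where
  intervalIntegrable t hbt := (h.intervalIntegrable t (hab.trans hbt)).mono_set <|
    uIcc_subset_uIcc (by rw [uIcc_of_le (hab.trans hbt)]; exact ⟨hab, hbt⟩) right_mem_uIcc
  eq_add_integral t hbt := by
    rw [h.eq_add_integral t (hab.trans hbt), h.eq_add_integral b hab, add_assoc,
      ← intervalIntegral.integral_interval_sub_left (h.intervalIntegrable t (hab.trans hbt))
        (h.intervalIntegrable b hab), add_sub_cancel]

lemma aestronglyMeasurable (h : IsPrimitiveFrom a ψ φ) :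
    AEStronglyMeasurable φ (volume.restrict (Ioi a)) := by
  refine (aecover_Iic tendsto_id).aestronglyMeasurable fun t ↦ ?_
  rw [Measure.restrict_restrict measurableSet_Iic, inter_comm, Ioi_inter_Iic]
  exact ((h.intervalIntegrable (max a t) (le_max_left a t)).1.mono_set
    (Ioc_subset_Ioc_right (le_max_right a t))).aestronglyMeasurable

lemma absolutelyContinuousOnInterval (h : IsPrimitiveFrom a ψ φ) (hab : a ≤ b) :
    AbsolutelyContinuousOnInterval ψ a b := by
  refine absolutelyContinuousOnInterval_of_dist_le
    (absolutelyContinuousOnInterval_intervalIntegral (h.intervalIntegrable b hab) left_mem_uIcc)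
    fun s hs t ht ↦ ?_
  rw [uIcc_of_le hab] at hs ht
  rw [h.eq_add_integral s hs.1, h.eq_add_integral t ht.1, dist_add_left]

lemma continuousOn_Icc (h : IsPrimitiveFrom a ψ φ) (hab : a ≤ b) : ContinuousOn ψ (Icc a b) :=
  uIcc_of_le hab ▸ (h.absolutelyContinuousOnInterval hab).continuousOn

lemma ae_hasDerivAt [CompleteSpace E] (h : IsPrimitiveFrom a ψ φ) (hab : a ≤ b) :
    ∀ᵐ t, t ∈ uIcc a b → HasDerivAt ψ (φ t) t := by
  filter_upwards [(h.intervalIntegrable b hab).ae_hasDerivAt_integral, volume.ae_ne a]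
    with t hderiv hta ht
  have hat : a < t := lt_of_le_of_ne (uIcc_of_le hab ▸ ht).1 hta.symm
  refine ((hderiv ht a left_mem_uIcc).const_add (ψ a)).congr_of_eventuallyEq ?_
  filter_upwards [Ioi_mem_nhds hat] with u hu using h.eq_add_integral u (le_of_lt hu)

lemma smul {𝕜 : Type*} [NormedField 𝕜] [NormedAlgebra ℝ 𝕜] [CompleteSpace 𝕜] [CompleteSpace E]
    [NormedSpace 𝕜 E] [IsScalarTower ℝ 𝕜 E] {w w' : ℝ → 𝕜} (hw : IsPrimitiveFrom a w w')
    (hψ : IsPrimitiveFrom a ψ φ) :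
    IsPrimitiveFrom a (fun t ↦ w t • ψ t) (fun t ↦ w t • φ t + w' t • ψ t) := by
  have hint (t : ℝ) (ht : a ≤ t) :
      IntervalIntegrable (fun u ↦ w u • φ u + w' u • ψ u) volume a t :=
    ((hψ.intervalIntegrable t ht).continuousOn_smul
        (hw.absolutelyContinuousOnInterval ht).continuousOn).add
      ((hw.intervalIntegrable t ht).smul_continuousOn
        (hψ.absolutelyContinuousOnInterval ht).continuousOn)
  refine ⟨hint, fun t ht ↦ ?_⟩
  rw [intervalIntegral_eq_sub_of_ae_hasDerivAt
    ((hw.absolutelyContinuousOnInterval ht).fun_smul (hψ.absolutelyContinuousOnInterval ht))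
    (hint t ht), add_sub_cancel]
  filter_upwards [hw.ae_hasDerivAt ht, hψ.ae_hasDerivAt ht] with u hwu hψu hu
  exact (hwu hu).fun_smul (hψu hu)

lemma exp_smul [CompleteSpace E] [NormedSpace ℂ E] [IsScalarTower ℝ ℂ E] {η : ℝ → E} (c : ℂ)
    (h : IsPrimitiveFrom a ψ fun t ↦ η t - c • ψ t) :
    IsPrimitiveFrom a (fun t ↦ exp (c * t) • ψ t) (fun t ↦ exp (c * t) • η t) := by
  have hexp : IsPrimitiveFrom a (fun t : ℝ ↦ exp (c * t)) (fun t ↦ exp (c * t) * c) := by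
    refine of_hasDerivAt (fun t ↦ ?_) (by fun_prop)
    simpa using ((hasDerivAt_id t).ofReal_comp.const_mul c).cexp
  refine (hexp.smul h).congr fun t _ ↦ ?_
  rw [smul_sub, mul_smul, sub_add_cancel]

section Convergence

variable {G : Type*} [NormedAddCommGroup G] {k : ℝ → G}

lemma one_sub_integral_mul_norm_le (h : IsPrimitiveFrom a ψ φ) (hk : IntegrableOn k (Ioi a))
    (hφ : ∀ t, a < t → ‖φ t‖ ≤ ‖k t‖ * ‖ψ t‖) (hat : a ≤ t)
    (hk_le : ∫ u in Ioi a, ‖k u‖ ≤ 1) :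
    (1 - ∫ u in Ioi a, ‖k u‖) * ‖ψ t‖ ≤ ‖ψ a‖ := by
  obtain ⟨τ, hτ, hmax⟩ :=
    isCompact_Icc.exists_isMaxOn (nonempty_Icc.2 hat) (h.continuousOn_Icc hat).norm
  have hτ_le : ‖ψ τ‖ ≤ ‖ψ a‖ + (∫ u in Ioi a, ‖k u‖) * ‖ψ τ‖ :=
    calc ‖ψ τ‖ = ‖ψ a + ∫ u in a..τ, φ u‖ := by rw [← h.eq_add_integral τ hτ.1]
      _ ≤ ‖ψ a‖ + ‖∫ u in a..τ, φ u‖ := norm_add_le _ _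
      _ ≤ ‖ψ a‖ + (∫ u in Ioi a, ‖k u‖) * ‖ψ τ‖ := by
        gcongr
        exact norm_intervalIntegral_le_integral_Ioi_mul hk hφ hτ.1
          fun u hu ↦ hmax ⟨hu.1, hu.2.trans hτ.2⟩
  calc (1 - ∫ u in Ioi a, ‖k u‖) * ‖ψ t‖
      ≤ (1 - ∫ u in Ioi a, ‖k u‖) * ‖ψ τ‖ :=
        mul_le_mul_of_nonneg_left (hmax (right_mem_Icc.2 hat)) (sub_nonneg.2 hk_le)
    _ ≤ ‖ψ a‖ := by linarith

lemma exists_norm_le_on_tail (h : IsPrimitiveFrom a ψ φ) (hk : IntegrableOn k (Ioi a))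
    (hφ : ∀ t, a < t → ‖φ t‖ ≤ ‖k t‖ * ‖ψ t‖) :
    ∃ T C : ℝ, a ≤ T ∧ ∀ t, T ≤ t → ‖ψ t‖ ≤ C := by
  have htail : ∀ᶠ T : ℝ in atTop, ∫ u in Ioi T, ‖k u‖ < 1 :=
    (tendsto_integral_Ioi_zero tendsto_id).eventually_lt_const one_pos
  obtain ⟨T, hT, haT⟩ := (htail.and (eventually_ge_atTop a)).exists
  refine ⟨T, ‖ψ T‖ / (1 - ∫ u in Ioi T, ‖k u‖), haT, fun t ht ↦ ?_⟩
  rw [le_div_iff₀' (sub_pos.2 hT)]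
  exact (h.mono_left haT).one_sub_integral_mul_norm_le (hk.mono_set (Ioi_subset_Ioi haT))
    (fun u hu ↦ hφ u (haT.trans_lt hu)) ht hT.le

lemma exists_tendsto_of_integrableOn (h : IsPrimitiveFrom a ψ φ) (hφ : IntegrableOn φ (Ioi a)) :
    ∃ L, Tendsto ψ atTop (𝓝 L) := by
  refine ⟨ψ a + ∫ u in Ioi a, φ u, Tendsto.congr' ?_
    ((intervalIntegral_tendsto_integral_Ioi a hφ tendsto_id).const_add (ψ a))⟩
  filter_upwards [eventually_ge_atTop a] with t hat using (h.eq_add_integral t hat).symm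

theorem exists_tendsto_of_norm_le (h : IsPrimitiveFrom a ψ φ) (hk : IntegrableOn k (Ioi a))
    (hφ : ∀ t, a < t → ‖φ t‖ ≤ ‖k t‖ * ‖ψ t‖) : ∃ L, Tendsto ψ atTop (𝓝 L) := by
  obtain ⟨T, C, haT, hC⟩ := h.exists_norm_le_on_tail hk hφ
  have hT := h.mono_left haT
  refine hT.exists_tendsto_of_integrableOn <|
    ((hk.mono_set (Ioi_subset_Ioi haT)).norm.mul_const C).mono' hT.aestronglyMeasurable ?_
  filter_upwards [ae_restrict_mem measurableSet_Ioi] with t ht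
  exact (hφ t (haT.trans_lt ht)).trans (by gcongr; exact hC t (le_of_lt ht))

end Convergence

end IsPrimitiveFrom

/-- `(x, y)` solves on `[a, ∞)`, in the integrated sense, the Dirac system with potential `f` and
spectral parameter `z`, written out as `x' = f x - z y`, `y' = z x - f y`. -/
structure IsDiracSolution (a : ℝ) (f : ℝ → ℂ) (z : ℂ) (x y : ℝ → ℂ) : Prop where
  fst : IsPrimitiveFrom a x fun t ↦ f t * x t - z * y t
  snd : IsPrimitiveFrom a y fun t ↦ z * x t - f t * y t

/-- The component `x - j y` of a solution of the Dirac system, `j = ± i`, freed from the oscillation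
`exp (-j z t)` that it has when the potential vanishes. -/
noncomputable def diracWave (j z : ℂ) (x y : ℝ → ℂ) (t : ℝ) : ℂ :=
  exp (j * z * t) * (x t - j * y t)

namespace IsDiracSolution

variable {a : ℝ} {f : ℝ → ℂ} {z j : ℂ} {x y : ℝ → ℂ}

lemma isPrimitiveFrom_diracWave (h : IsDiracSolution a f z x y) (hj : j ^ 2 = -1) :
    IsPrimitiveFrom a (diracWave j z x y)
      fun t ↦ f t * exp (2 * (j * z * t)) * diracWave (-j) z x y t := by
  have hxy : IsPrimitiveFrom a (fun t ↦ x t - j * y t)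
      fun t ↦ f t * (x t + j * y t) - (j * z) • (x t - j * y t) :=
    (h.fst.sub (h.snd.const_smul j)).congr fun t _ ↦ by
      simp only [smul_eq_mul]
      linear_combination (-z * y t) * hj
  refine (hxy.exp_smul (j * z)).congr fun t _ ↦ ?_
  have hexp : exp (2 * (j * z * t)) * exp (-j * z * t) = exp (j * z * t) := by
    rw [← exp_add]
    ring_nf
  rw [diracWave, smul_eq_mul, ← hexp]
  ring

theorem exists_tendsto_diracWave {s : ℝ} (h : IsDiracSolution a f s x y)
    (hf : IntegrableOn f (Ioi a)) : ∃ L, Tendsto (diracWave I s x y) atTop (𝓝 L) := by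
  have hpair := (h.isPrimitiveFrom_diracWave I_sq).prodMk
    (h.isPrimitiveFrom_diracWave (j := -I) (by rw [neg_sq, I_sq]))
  obtain ⟨L, hL⟩ := hpair.exists_tendsto_of_norm_le hf fun t _ ↦ by
    have hnorm (j : ℂ) (hj : j.re = 0) : ‖exp (2 * (j * s * t))‖ = 1 := by
      simp [norm_exp, hj]
    rw [neg_neg, Prod.norm_mk, Prod.norm_mk, norm_mul, norm_mul, norm_mul, norm_mul,
      hnorm I I_re, hnorm (-I) (by simp), mul_one, ← mul_max_of_nonneg _ _ (norm_nonneg _),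
      max_comm]
  exact ⟨L.1, (continuous_fst.tendsto L).comp hL⟩

end IsDiracSolution

section DiracMatrix

variable {ι R : Type*} [CommRing R] (z q : R) (N : Matrix (Fin 2) ι R) (j : ι)

lemma dirac_matrix_apply_zero :
    ((!![(0 : R), 1; -1, 0])⁻¹ * (z • N - !![(0 : R), q; q, 0] * N)) 0 j =
      q * N 0 j - z * N 1 j := by
  simp [Matrix.inv_def, Matrix.mul_apply, Matrix.vecMul, dotProduct]

lemma dirac_matrix_apply_one :
    ((!![(0 : R), 1; -1, 0])⁻¹ * (z • N - !![(0 : R), q; q, 0] * N)) 1 j =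
      z * N 0 j - q * N 1 j := by
  simp [Matrix.inv_def, Matrix.mul_apply, Matrix.vecMul, dotProduct]

end DiracMatrix

lemma isDiracSolution_col {ι : Type*} {f : ℝ → ℂ} (hf : IntegrableOn f (Ioi 0)) {z : ℂ}
    {M : ℝ → Matrix (Fin 2) ι ℂ} {M₀ : Matrix (Fin 2) ι ℂ} {j : ι}
    (hM_cont : ∀ i, ContinuousOn (fun t ↦ M t i j) (Ici 0))
    (hM_eq : ∀ t, 0 ≤ t → ∀ i, M t i j = M₀ i j + ∫ u in (0 : ℝ)..t,
      ((!![(0 : ℂ), 1; -1, 0])⁻¹ * (z • M u - !![(0 : ℂ), f u; f u, 0] * M u)) i j) :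
    IsDiracSolution 0 f z (fun t ↦ M t 0 j) (fun t ↦ M t 1 j) := by
  have hM_zero (i : Fin 2) : M 0 i j = M₀ i j := by simpa using hM_eq 0 le_rfl i
  have hint (i : Fin 2) (t : ℝ) (ht : 0 ≤ t) :
      IntervalIntegrable (fun u ↦ M u i j) volume 0 t ∧
        IntervalIntegrable (fun u ↦ f u * M u i j) volume 0 t := by
    have hcont : ContinuousOn (fun u ↦ M u i j) (uIcc 0 t) :=
      (hM_cont i).mono (uIcc_of_le ht ▸ Icc_subset_Ici_self)
    refine ⟨hcont.intervalIntegrable, IntervalIntegrable.mul_continuousOn ?_ hcont⟩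
    exact (intervalIntegrable_iff_integrableOn_Ioc_of_le ht).2 (hf.mono_set Ioc_subset_Ioi_self)
  refine ⟨⟨fun t ht ↦ (hint 0 t ht).2.sub ((hint 1 t ht).1.const_mul z), fun t ht ↦ ?_⟩,
    ⟨fun t ht ↦ ((hint 0 t ht).1.const_mul z).sub (hint 1 t ht).2, fun t ht ↦ ?_⟩⟩
  · simp only [hM_eq t ht, hM_zero, dirac_matrix_apply_zero]
  · simp only [hM_eq t ht, hM_zero, dirac_matrix_apply_one]

theorem stmt_19_general (f : ℝ → ℂ) (hf : IntegrableOn f (Ioi 0)) (s : ℝ)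
    (M : ℝ → Matrix (Fin 2) (Fin 2) ℂ) (M₀ : Matrix (Fin 2) (Fin 2) ℂ)
    (hM_cont : ∀ i j, ContinuousOn (fun t ↦ M t i j) (Ici 0))
    (hM_eq : ∀ t, 0 ≤ t → ∀ i j, M t i j = M₀ i j + ∫ u in (0 : ℝ)..t,
      ((!![(0 : ℂ), 1; -1, 0])⁻¹ * ((s : ℂ) • M u - !![(0 : ℂ), f u; f u, 0] * M u)) i j) :
    ∃ L : ℂ, Tendsto (fun t : ℝ ↦ exp (I * s * t) / 2 *
      ((M t 0 0 - I * M t 1 0) + I * (M t 0 1 - I * M t 1 1))) atTop (𝓝 L) := by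
  have hcol (j : Fin 2) :
      ∃ L, Tendsto (diracWave I s (fun t ↦ M t 0 j) (fun t ↦ M t 1 j)) atTop (𝓝 L) :=
    (isDiracSolution_col hf (hM_cont · j) (hM_eq · · · j)).exists_tendsto_diracWave hf
  obtain ⟨L₀, hL₀⟩ := hcol 0
  obtain ⟨L₁, hL₁⟩ := hcol 1
  refine ⟨(L₀ + I * L₁) / 2, ((hL₀.add (hL₁.const_mul I)).div_const 2).congr fun t ↦ ?_⟩
  simp only [diracWave]
  ring

/-- If `f ∈ L¹(0,∞)`, then `a(t,s)` converges as `t → ∞` for every `s ∈ ℝ`. -/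
theorem stmt_19
    (f : ℝ → ℝ) (hf_meas : Measurable f)
    (hf_zero : ∀ x : ℝ, x < 0 → f x = 0)
    (hf_L1 : IntegrableOn f (Set.Ioi (0:ℝ)))
    (M : ℝ → ℂ → Matrix (Fin 2) (Fin 2) ℂ)
    (hM_cont : ∀ (z : ℂ) (i j : Fin 2), Continuous fun t : ℝ => M t z i j)
    (hM_eq : ∀ (z : ℂ) (t : ℝ), 0 ≤ t → ∀ i j : Fin 2,
      M t z i j = (1 : Matrix (Fin 2) (Fin 2) ℂ) i j
        + ∫ u in (0:ℝ)..t,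
            ((!![(0:ℂ), 1; -1, 0])⁻¹
              * (z • M u z - !![(0:ℂ), (f u : ℂ); (f u : ℂ), 0] * M u z)) i j)
    (E Et : ℝ → ℂ → ℂ)
    (hE : ∀ (t : ℝ) (z : ℂ), E t z = M t z 0 0 - Complex.I * M t z 1 0)
    (hEt : ∀ (t : ℝ) (z : ℂ), Et t z = M t z 0 1 - Complex.I * M t z 1 1)
    (a : ℝ → ℝ → ℂ)
    (ha : ∀ t s : ℝ, a t s =
      Complex.exp (Complex.I * (s : ℂ) * (t : ℂ)) / 2 * (E t s + Complex.I * Et t s)) :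
    ∀ s : ℝ, ∃ L : ℂ, Tendsto (fun t : ℝ => a t s) atTop (nhds L) := by
  intro s
  simpa only [ha, hE, hEt] using stmt_19_general (fun t ↦ (f t : ℂ)) hf_L1.ofReal s (M · s) 1
    (fun i j ↦ (hM_cont s i j).continuousOn) (hM_eq s)
end
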